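/- Let A' be an essential line arrangement of d' ≥ 2 lines in P^2 and let L be a generic line, i.e. a line not in A' passing through no intersection point of A' (so L meets the lines of A' in d' distinct points). Set A = A' ∪ {L}. Then τ(A) = τ(A') + d' and r(A) = r(A') + 1. -/

import Mathlib

open Classical MvPolynomial

variable {K : Type*} [Field K] [CharZero K] {ℓ : ℕ}

/-- A (central) hyperplane arrangement: a finite set of nonzero linear forms,
pairwise non-proportional. -/
def IsArrangement (A : Finset (MvPolynomial (Fin ℓ) K)) : Prop :=
  (∀ α ∈ A, α ≠ 0 ∧ α.IsHomogeneous 1) ∧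
    ∀ α ∈ A, ∀ β ∈ A, α ≠ β → ∀ c : K, α ≠ c • β

/-- The arrangement is essential: the common zero set of its forms is `{0}`. -/
def IsEssential (A : Finset (MvPolynomial (Fin ℓ) K)) : Prop :=
  ∀ v : Fin ℓ → K, (∀ α ∈ A, eval v α = 0) → v = 0

/-- The defining polynomial `Q(A)`. -/
noncomputable def Qpoly (A : Finset (MvPolynomial (Fin ℓ) K)) : MvPolynomial (Fin ℓ) K :=
  ∏ α ∈ A, α

/-- Apply a derivation `θ = Σ θ_j ∂_j` to a polynomial. -/
noncomputable def applyDer (θ : Fin ℓ → MvPolynomial (Fin ℓ) K)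
    (f : MvPolynomial (Fin ℓ) K) : MvPolynomial (Fin ℓ) K :=
  ∑ j, θ j * pderiv j f

/-- The minimal degree of a Jacobian relation `r(A)`. -/
noncomputable def mdr (A : Finset (MvPolynomial (Fin ℓ) K)) : ℕ :=
  sInf {r | ∃ θ : Fin ℓ → MvPolynomial (Fin ℓ) K, θ ≠ 0 ∧
    (∀ j, (θ j).IsHomogeneous r) ∧ applyDer θ (Qpoly A) = 0}

/-- The number of elements `|A^H|` of the restriction of `A` to `H`:
the number of distinct subspaces `H ∩ ker α_L`, `L ∈ A \ {H}`. -/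
noncomputable def restCard (A : Finset (MvPolynomial (Fin ℓ) K))
    (H : MvPolynomial (Fin ℓ) K) : ℕ :=
  ((A.erase H).image fun L => {v : Fin ℓ → K | eval v H = 0 ∧ eval v L = 0}).card

/-- The number `n_j(A)` of intersection points of multiplicity `j` of a line
arrangement `A` in `P^2`. An intersection point is encoded (bijectively) by the set
of lines of `A` passing through it, which has at least two elements. -/
noncomputable def nPoints (A : Finset (MvPolynomial (Fin 3) K)) (j : ℕ) : ℕ :=
  Set.ncard {T : Finset (MvPolynomial (Fin 3) K) |
    ∃ v : Fin 3 → K, v ≠ 0 ∧ T = A.filter (fun α => eval v α = 0) ∧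
      2 ≤ T.card ∧ T.card = j}

/-- The maximal multiplicity `m(A)` of an intersection point of `A`. -/
noncomputable def maxMult (A : Finset (MvPolynomial (Fin 3) K)) : ℕ :=
  sSup {j | 2 ≤ j ∧ nPoints A j ≠ 0}

/-- The global Tjurina number `τ(A) = Σ_{j ≥ 2} n_j(A)·(j−1)²` of a line arrangement. -/
noncomputable def tjurina (A : Finset (MvPolynomial (Fin 3) K)) : ℕ :=
  ∑ j ∈ Finset.range (A.card + 1), nPoints A j * (j - 1) ^ 2

/-- `τ(d,r)_max = (d−1)(d−r−1) + r² − C(2r−d+2, 2)`, for `d/2 ≤ r ≤ d−1`. -/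
def tauMax (d r : ℕ) : ℕ :=
  (d - 1) * (d - r - 1) + r ^ 2 - Nat.choose (2 * r - d + 2) 2

/-- A line arrangement `A` is maximal Tjurina of type `(d, r)` if it consists of `d`
lines, `r(A) = r` and `τ(A) = τ(d,r)_max`. -/
def IsMaxTjurina (A : Finset (MvPolynomial (Fin 3) K)) (d r : ℕ) : Prop :=
  A.card = d ∧ mdr A = r ∧ tjurina A = tauMax d r

/-!
Write `Q` for the defining polynomial of `A'` and `E` for the Euler derivation. Adding a suitable
multiple of `E` turns a derivation `θ` with `θ f ∈ (f)` into a Jacobian relation of `f`. Applied to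
`L θ` and the polynomial `L Q`, this turns a Jacobian relation `θ` of `Q` into one of `L Q`, of
degree one higher.

Conversely, a Jacobian relation of `L Q` of degree `s` becomes, after such a correction, a Jacobian
relation `ψ` of `Q` of degree `s` which is tangent to `L`. At the `d'` points where `L` meets the
other lines, `ψ` is tangent to two distinct lines, so `ψ` is proportional to `E` there: the entries
of `x × ψ`, of degree `s + 1`, vanish at `d'` points of `L`. If `s + 1 < d'` they vanish on `L`, and
then `L` divides `ψ`, since `ψ` annihilates `Q` whereas `E` does not; the quotient `ψ / L` is a
relation of `Q` of degree `s - 1`. Otherwise `s ≥ d' - 1`, and it suffices that `r(A') ≤ d' - 2`.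

The Tjurina number grows by the `d'` double points of `A` on `L`.
-/

section Forms

variable {σ R : Type*}

theorem isHomogeneous_X_mul_pderiv [CommSemiring R] {f : MvPolynomial σ R} {d : ℕ}
    (hf : f.IsHomogeneous d) (i j : σ) : (X j * pderiv i f).IsHomogeneous d := by
  obtain rfl | hd := Nat.eq_zero_or_pos d
  · rw [← totalDegree_zero_iff_isHomogeneous, totalDegree_eq_zero_iff_eq_C] at hf
    rw [hf, pderiv_C, mul_zero]
    exact isHomogeneous_zero _ _ _
  · simpa [Nat.add_sub_cancel' hd] using (isHomogeneous_X R j).mul hf.pderiv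

theorem isHomogeneous_of_isHomogeneous_mul [CommRing R] [IsDomain R] {f g : MvPolynomial σ R}
    {d e : ℕ} (hf : f.IsHomogeneous d) (hf₀ : f ≠ 0) (hfg : (f * g).IsHomogeneous (d + e)) :
    g.IsHomogeneous e := by
  let _ : GradedAlgebra (homogeneousSubmodule σ R) := MvPolynomial.gradedAlgebra
  have hdecomp := DirectSum.coe_decompose_mul_add_of_left_mem (j := e) (b := g)
    (homogeneousSubmodule σ R) hf
  rw [DirectSum.decompose_of_mem_same _ hfg] at hdecomp
  rw [mul_left_cancel₀ hf₀ hdecomp]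
  exact (DirectSum.decompose (homogeneousSubmodule σ R) g e).2

theorem exists_eq_sum_C_mul_X [CommSemiring R] [Fintype σ] {α : MvPolynomial σ R}
    (hα : α.IsHomogeneous 1) : ∃ a : σ → R, α = ∑ j, C (a j) * X j := by
  have hmem : α ∈ Submodule.span R (Set.range X) := homogeneousSubmodule_one_eq_span_X.le hα
  obtain ⟨a, ha⟩ := (Submodule.mem_span_range_iff_exists_fun R).1 hmem
  exact ⟨a, by simp only [← ha, smul_eq_C_mul]⟩

end Forms

section LinearForms

variable {σ F : Type*} [Field F]

theorem prime_of_isHomogeneous_one {α : MvPolynomial σ F} (hα : α.IsHomogeneous 1)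
    (hα₀ : α ≠ 0) : Prime α := by
  refine (irreducible_of_totalDegree_eq_one (hα.totalDegree hα₀) fun x hx => ?_).prime
  obtain ⟨i, hi⟩ := exists_coeff_ne_zero hα₀
  exact (ne_zero_of_dvd_ne_zero hi (hx i)).isUnit

theorem exists_eq_smul_of_dvd {α β : MvPolynomial σ F} (hα : α.IsHomogeneous 1)
    (hα₀ : α ≠ 0) (hβ : β.IsHomogeneous 1) (hdvd : α ∣ β) : ∃ c : F, β = c • α := by
  obtain ⟨q, rfl⟩ := hdvd
  have hq := isHomogeneous_of_isHomogeneous_mul (e := 0) hα hα₀ hβ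
  rw [← totalDegree_zero_iff_isHomogeneous, totalDegree_eq_zero_iff_eq_C] at hq
  exact ⟨coeff 0 q, by rw [smul_eq_C_mul, ← hq, mul_comm]⟩

theorem exists_eval_eq_one [Finite σ] {α : MvPolynomial σ F} (hα : α.IsHomogeneous 1)
    (hα₀ : α ≠ 0) : ∃ w : σ → F, eval w α = 1 := by
  cases nonempty_fintype σ
  obtain ⟨a, rfl⟩ := exists_eq_sum_C_mul_X hα
  obtain ⟨k, hk⟩ : ∃ k, a k ≠ 0 := by
    by_contra! ha
    simp [ha] at hα₀
  exact ⟨Pi.single k (a k)⁻¹, by simp [Pi.single_apply, hk]⟩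

theorem exists_ne_zero_eval_eq_zero [Fintype σ] (hσ : 2 < Fintype.card σ) {α β : MvPolynomial σ F}
    (hα : α.IsHomogeneous 1) (hβ : β.IsHomogeneous 1) :
    ∃ w : σ → F, w ≠ 0 ∧ eval w α = 0 ∧ eval w β = 0 := by
  obtain ⟨a, rfl⟩ := exists_eq_sum_C_mul_X hα
  obtain ⟨b, rfl⟩ := exists_eq_sum_C_mul_X hβ
  have hker : LinearMap.ker (Matrix.of ![a, b]).mulVecLin ≠ ⊥ :=
    LinearMap.ker_ne_bot_of_finrank_lt (by simpa using hσ)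
  obtain ⟨w, hw, hw₀⟩ := (Submodule.ne_bot_iff _).1 hker
  refine ⟨w, hw₀, ?_, ?_⟩
  · simpa [Matrix.mulVec, dotProduct] using congrFun hw 0
  · simpa [Matrix.mulVec, dotProduct] using congrFun hw 1

/-- The substitution `x ↦ x - L(x) w`. When `L(w) = 1` it is the restriction of polynomials to the
hyperplane `L = 0`, followed by pullback along the projection with centre `w`; this realises
`S / (L)` as a graded subring of `S`. -/
noncomputable def restrictAlong (L : MvPolynomial σ F) (w : σ → F) :
    MvPolynomial σ F →ₐ[F] MvPolynomial σ F :=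
  aeval fun i => X i - C (w i) * L

section RestrictAlong

variable {L : MvPolynomial σ F} {w : σ → F}

theorem isHomogeneous_restrictAlong (hL : L.IsHomogeneous 1) {p : MvPolynomial σ F} {n : ℕ}
    (hp : p.IsHomogeneous n) : (restrictAlong L w p).IsHomogeneous n := by
  simpa [restrictAlong] using hp.aeval _ fun i => (isHomogeneous_X F i).sub (hL.C_mul (w i))

theorem dvd_sub_restrictAlong (p : MvPolynomial σ F) : L ∣ p - restrictAlong L w p := by
  have hmk : (Ideal.Quotient.mkₐ F (Ideal.span {L})).comp (restrictAlong L w) =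
      Ideal.Quotient.mkₐ F (Ideal.span {L}) := by
    ext i
    simp [restrictAlong, Ideal.Quotient.eq_zero_iff_mem.2 (Ideal.mem_span_singleton_self L)]
  rw [← Ideal.mem_span_singleton, ← Ideal.Quotient.eq]
  exact (DFunLike.congr_fun hmk p).symm

theorem restrictAlong_of_isHomogeneous_one {α : MvPolynomial σ F} (hα : α.IsHomogeneous 1) :
    restrictAlong L w α = α - C (eval w α) * L := by
  have hspan : α ∈ Submodule.span F (Set.range X) := homogeneousSubmodule_one_eq_span_X.le hα
  clear hα
  induction hspan using Submodule.span_induction with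
  | mem _ h => obtain ⟨i, rfl⟩ := h; simp [restrictAlong]
  | zero => simp
  | add α β _ _ ihα ihβ => rw [map_add, ihα, ihβ, map_add, C_add]; ring
  | smul c α _ ihα => rw [map_smul, ihα, smul_eval, C_mul, smul_eq_C_mul, smul_eq_C_mul]; ring

theorem restrictAlong_eq_zero_iff (hL : L.IsHomogeneous 1) (hw : eval w L = 1)
    {p : MvPolynomial σ F} : restrictAlong L w p = 0 ↔ L ∣ p := by
  constructor
  · intro hp
    simpa [hp] using dvd_sub_restrictAlong (L := L) (w := w) p
  · rintro ⟨q, rfl⟩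
    rw [map_mul, restrictAlong_of_isHomogeneous_one hL, hw, C_1, one_mul, sub_self, zero_mul]

end RestrictAlong

/-- Membership in `Ideal.span {L, α}` is divisibility by `α` on the hyperplane `L = 0`, where a
nonzero form of degree `n` cannot be divisible by more than `n` non-proportional linear forms. -/
theorem dvd_of_forall_mem_span_pair [Finite σ] {L : MvPolynomial σ F} (hL : L.IsHomogeneous 1)
    (hL₀ : L ≠ 0) {A : Finset (MvPolynomial σ F)} (hA : ∀ α ∈ A, α.IsHomogeneous 1)
    (hLA : ∀ α ∈ A, ¬ L ∣ α)
    (hpair : (A : Set (MvPolynomial σ F)).Pairwise fun α β => β ∉ Ideal.span {L, α})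
    {p : MvPolynomial σ F} {n : ℕ} (hp : p.IsHomogeneous n) (hn : n < A.card)
    (hmem : ∀ α ∈ A, p ∈ Ideal.span {L, α}) : L ∣ p := by
  obtain ⟨w, hw⟩ := exists_eval_eq_one hL hL₀
  let ρ := restrictAlong L w
  have hρ₀ : ∀ α ∈ A, ρ α ≠ 0 := fun α hα h =>
    hLA α hα ((restrictAlong_eq_zero_iff hL hw).1 h)
  have hρ₁ : ∀ α ∈ A, (ρ α).IsHomogeneous 1 := fun α hα =>
    isHomogeneous_restrictAlong hL (hA α hα)
  have hcoprime : (A : Set (MvPolynomial σ F)).Pairwise (Function.onFun IsRelPrime ρ) := by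
    intro α hα β hβ hne
    refine (prime_of_isHomogeneous_one (hρ₁ α hα) (hρ₀ α hα)).irreducible.isRelPrime_iff_not_dvd.2
      fun hdvd => hpair hα hβ hne ?_
    obtain ⟨q, hq⟩ := hdvd
    obtain ⟨r, hr⟩ := dvd_sub_restrictAlong (L := L) (w := w) α
    obtain ⟨s, hs⟩ := dvd_sub_restrictAlong (L := L) (w := w) β
    exact Ideal.mem_span_pair.2 ⟨s - q * r, q, by linear_combination q * hr - hs - hq⟩
  have hprod : ∏ α ∈ A, ρ α ∣ ρ p := by
    refine Finset.prod_dvd_of_isRelPrime hcoprime fun α hα => ?_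
    obtain ⟨a, b, rfl⟩ := Ideal.mem_span_pair.1 (hmem α hα)
    simp [ρ, (restrictAlong_eq_zero_iff hL hw).2 dvd_rfl]
  have hprod₁ : (∏ α ∈ A, ρ α).IsHomogeneous A.card := by
    simpa using IsHomogeneous.prod A ρ (fun _ => 1) hρ₁
  by_contra hdvd
  have hρp : ρ p ≠ 0 := fun h => hdvd ((restrictAlong_eq_zero_iff hL hw).1 h)
  have hdeg := totalDegree_le_of_dvd_of_isDomain hprod hρp
  rw [hprod₁.totalDegree (Finset.prod_ne_zero_iff.2 hρ₀),
    (isHomogeneous_restrictAlong hL hp).totalDegree hρp] at hdeg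
  exact hdeg.not_gt hn

end LinearForms

section CrossProduct

open Matrix

variable {R : Type*} [CommRing R]

theorem smul_eq_smul_of_cross_eq_zero {m u : Fin 3 → R} (h : m ⨯₃ u = 0) (k : Fin 3) :
    m k • u = u k • m := by
  have h0 := congrFun h 0
  have h1 := congrFun h 1
  have h2 := congrFun h 2
  simp only [cross_apply, Pi.zero_apply, cons_val] at h0 h1 h2
  ext j
  fin_cases k <;> fin_cases j <;> simp only [Pi.smul_apply, smul_eq_mul] <;> grind

theorem cross_eq_zero_of_dotProduct_eq_zero {a b u v : Fin 3 → R} {k : Fin 3}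
    (hk : IsUnit ((a ⨯₃ b) k)) (hau : a ⬝ᵥ u = 0) (hbu : b ⬝ᵥ u = 0) (hav : a ⬝ᵥ v = 0)
    (hbv : b ⬝ᵥ v = 0) : u ⨯₃ v = 0 := by
  have hu : a ⨯₃ b ⨯₃ u = 0 := by simp [cross_cross_eq_smul_sub_smul, hau, hbu]
  have hv : a ⨯₃ b ⨯₃ v = 0 := by simp [cross_cross_eq_smul_sub_smul, hav, hbv]
  have hsmul : (a ⨯₃ b) k • (u ⨯₃ v) = 0 := by
    rw [← LinearMap.smul_apply, ← map_smul, smul_eq_smul_of_cross_eq_zero hu, map_smul,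
      LinearMap.smul_apply, hv, smul_zero]
  exact hk.smul_eq_zero.1 hsmul

theorem map_cross {S : Type*} [CommRing S] (φ : R →+* S) (u v : Fin 3 → R) :
    φ ∘ (u ⨯₃ v) = (φ ∘ u) ⨯₃ (φ ∘ v) := by
  ext i
  fin_cases i <;> simp [cross_apply]

end CrossProduct

section Derivations

variable {F : Type*} [Field F]

theorem applyDer_mul (θ : Fin ℓ → MvPolynomial (Fin ℓ) F) (f g : MvPolynomial (Fin ℓ) F) :
    applyDer θ (f * g) = applyDer θ f * g + f * applyDer θ g := by
  simp only [applyDer, pderiv_mul, Finset.sum_mul, Finset.mul_sum, ← Finset.sum_add_distrib]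
  exact Finset.sum_congr rfl fun j _ => by ring

theorem smul_applyDer (a : MvPolynomial (Fin ℓ) F) (θ : Fin ℓ → MvPolynomial (Fin ℓ) F)
    (f : MvPolynomial (Fin ℓ) F) : applyDer (a • θ) f = a * applyDer θ f := by
  simp only [applyDer, Finset.mul_sum, Pi.smul_apply, smul_eq_mul, mul_assoc]

theorem sub_applyDer (θ η : Fin ℓ → MvPolynomial (Fin ℓ) F) (f : MvPolynomial (Fin ℓ) F) :
    applyDer (θ - η) f = applyDer θ f - applyDer η f := by
  simp only [applyDer, Pi.sub_apply, sub_mul, Finset.sum_sub_distrib]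

theorem X_applyDer {f : MvPolynomial (Fin ℓ) F} {d : ℕ} (hf : f.IsHomogeneous d) :
    applyDer X f = C (d : F) * f := by
  rw [applyDer, hf.sum_X_mul_pderiv, nsmul_eq_mul, map_natCast]

theorem applyDer_sum_C_mul_X (θ : Fin ℓ → MvPolynomial (Fin ℓ) F) (a : Fin ℓ → F) :
    applyDer θ (∑ j, C (a j) * X j) = ∑ j, C (a j) * θ j := by
  simp [applyDer, pderiv_X, Pi.single_apply, mul_comm]

theorem C_applyDer {α : MvPolynomial (Fin ℓ) F} (hα : α.IsHomogeneous 1) (w : Fin ℓ → F) :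
    applyDer (fun j => C (w j)) α = C (eval w α) := by
  obtain ⟨a, rfl⟩ := exists_eq_sum_C_mul_X hα
  simp [applyDer_sum_C_mul_X]

theorem isHomogeneous_applyDer_mul_X {θ : Fin ℓ → MvPolynomial (Fin ℓ) F} {r : ℕ}
    (hθ : ∀ j, (θ j).IsHomogeneous r) {f : MvPolynomial (Fin ℓ) F} {d : ℕ}
    (hf : f.IsHomogeneous d) (i : Fin ℓ) : (applyDer θ f * X i).IsHomogeneous (d + r) := by
  rw [applyDer, Finset.sum_mul]
  refine IsHomogeneous.sum _ _ _ fun j _ => ?_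
  rw [mul_assoc, mul_comm, mul_comm (pderiv j f)]
  exact (isHomogeneous_X_mul_pderiv hf j i).mul (hθ j)

theorem eq_zero_of_applyDer_smul_X_eq_zero {f h : MvPolynomial (Fin ℓ) F} {d : ℕ}
    (hf : f.IsHomogeneous d) (hf₀ : f ≠ 0) (hd : (d : F) ≠ 0) (hker : applyDer (h • X) f = 0) :
    h = 0 := by
  rw [smul_applyDer, X_applyDer hf] at hker
  exact (mul_eq_zero.1 hker).resolve_right (mul_ne_zero (C_ne_zero.2 hd) hf₀)

theorem dvd_applyDer_of_dvd_applyDer_mul {p g : MvPolynomial (Fin ℓ) F} (hp : Prime p)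
    (hg : ¬ p ∣ g) {θ : Fin ℓ → MvPolynomial (Fin ℓ) F} (hθ : p ∣ applyDer θ (p * g)) :
    p ∣ applyDer θ p := by
  rw [applyDer_mul, dvd_add_left (dvd_mul_right _ _)] at hθ
  exact (hp.dvd_or_dvd hθ).resolve_right hg

/-- The derivation `θ - (g / d) E`, where `E = ∑ x_j ∂_j` is the Euler derivation. If `θ f = g f`
for a form `f` of degree `d`, then it is the modification of `θ` by a multiple of `E` that
annihilates `f`. -/
noncomputable def subEuler (d : ℕ) (g : MvPolynomial (Fin ℓ) F)
    (θ : Fin ℓ → MvPolynomial (Fin ℓ) F) : Fin ℓ → MvPolynomial (Fin ℓ) F :=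
  θ - (C (d : F)⁻¹ * g) • X

theorem subEuler_ne_zero {θ : Fin ℓ → MvPolynomial (Fin ℓ) F} (hθ₀ : θ ≠ 0)
    {f : MvPolynomial (Fin ℓ) F} {e : ℕ} (hf : f.IsHomogeneous e) (hf₀ : f ≠ 0)
    (he : (e : F) ≠ 0) (hθ : applyDer θ f = 0) (d : ℕ) (g : MvPolynomial (Fin ℓ) F) :
    subEuler d g θ ≠ 0 := by
  intro hzero
  have hθE : θ = (C (d : F)⁻¹ * g) • X := sub_eq_zero.1 hzero
  have hcoeff := eq_zero_of_applyDer_smul_X_eq_zero hf hf₀ he (hθE ▸ hθ)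
  rw [hcoeff, zero_smul] at hθE
  exact hθ₀ hθE

/-- `θ` is a Jacobian relation of `f` of degree `r`: a syzygy among the partial derivatives of `f`
whose entries are forms of degree `r`. The zero relation is allowed. -/
def IsJacobianRelation (f : MvPolynomial (Fin ℓ) F) (r : ℕ)
    (θ : Fin ℓ → MvPolynomial (Fin ℓ) F) : Prop :=
  (∀ j, (θ j).IsHomogeneous r) ∧ applyDer θ f = 0

theorem isJacobianRelation_subEuler {f g : MvPolynomial (Fin ℓ) F} {d r : ℕ}
    (hf : f.IsHomogeneous d) (hf₀ : f ≠ 0) (hd : (d : F) ≠ 0)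
    {θ : Fin ℓ → MvPolynomial (Fin ℓ) F} (hθ : ∀ j, (θ j).IsHomogeneous r)
    (hθf : applyDer θ f = g * f) : IsJacobianRelation f r (subEuler d g θ) := by
  constructor
  · intro j
    have hgX : (g * X j).IsHomogeneous r := by
      refine isHomogeneous_of_isHomogeneous_mul hf hf₀ ?_
      have hmul := isHomogeneous_applyDer_mul_X hθ hf j
      rwa [hθf, mul_comm g, mul_assoc] at hmul
    simpa [subEuler, mul_assoc] using (hθ j).sub (hgX.C_mul (d : F)⁻¹)
  · have hinv : C (d : F)⁻¹ * C (d : F) = (1 : MvPolynomial (Fin ℓ) F) := by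
      rw [← C_mul, inv_mul_cancel₀ hd, C_1]
    rw [subEuler, sub_applyDer, smul_applyDer, X_applyDer hf, hθf]
    linear_combination (-(g * f)) * hinv

theorem exists_isJacobianRelation_mul {f g : MvPolynomial (Fin ℓ) F} {d e r : ℕ}
    (hf : f.IsHomogeneous d) (hf₀ : f ≠ 0) (hd : (d : F) ≠ 0) (hg : g.IsHomogeneous e)
    (hg₀ : g ≠ 0) (hed : ((e + d : ℕ) : F) ≠ 0) {θ : Fin ℓ → MvPolynomial (Fin ℓ) F}
    (hθ₀ : θ ≠ 0) (hθ : IsJacobianRelation f r θ) :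
    ∃ η, η ≠ 0 ∧ IsJacobianRelation (g * f) (e + r) η := by
  refine ⟨subEuler (e + d) (applyDer θ g) (g • θ), ?_, ?_⟩
  · refine subEuler_ne_zero (smul_ne_zero hg₀ hθ₀) hf hf₀ hd ?_ _ _
    rw [smul_applyDer, hθ.2, mul_zero]
  · refine isJacobianRelation_subEuler (hg.mul hf) (mul_ne_zero hg₀ hf₀) hed
      (fun j => hg.mul (hθ.1 j)) ?_
    rw [smul_applyDer, applyDer_mul, hθ.2]
    ring

theorem exists_isJacobianRelation_of_dvd {f g : MvPolynomial (Fin ℓ) F} {e r : ℕ}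
    (hg : g.IsHomogeneous e) (hg₀ : g ≠ 0) {θ : Fin ℓ → MvPolynomial (Fin ℓ) F}
    (hθ₀ : θ ≠ 0) (hθ : IsJacobianRelation f r θ) (hdvd : ∀ j, g ∣ θ j) :
    ∃ t η, r = e + t ∧ η ≠ 0 ∧ IsJacobianRelation f t η := by
  choose η hη using hdvd
  obtain rfl : θ = g • η := funext hη
  obtain ⟨k, hk⟩ := Function.ne_iff.1 hθ₀
  have hηk : η k ≠ 0 := right_ne_zero_of_mul hk
  have hr : r = e + (η k).totalDegree := by
    rw [← (hθ.1 k).totalDegree hk, Pi.smul_apply, smul_eq_mul,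
      totalDegree_mul_of_isDomain hg₀ hηk, hg.totalDegree hg₀]
  refine ⟨_, η, hr, right_ne_zero_of_smul hθ₀, fun j => ?_, ?_⟩
  · exact isHomogeneous_of_isHomogeneous_mul hg hg₀ (hr ▸ hθ.1 j)
  · have hmul := hθ.2
    rw [smul_applyDer] at hmul
    exact (mul_eq_zero.1 hmul).resolve_left hg₀

end Derivations

section Plane

open Matrix

variable {F : Type*} [Field F]

/-- Modulo `I`, both `X` and `θ` are orthogonal to the coefficient vectors of `α` and `β`, hence
they are parallel. -/
theorem cross_mem_of_applyDer_mem {α β : MvPolynomial (Fin 3) F} (hα : α.IsHomogeneous 1)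
    (hβ : β.IsHomogeneous 1) (hαβ : LinearIndependent F ![α, β])
    {θ : Fin 3 → MvPolynomial (Fin 3) F} {I : Ideal (MvPolynomial (Fin 3) F)}
    (hαI : α ∈ I) (hβI : β ∈ I) (hθα : applyDer θ α ∈ I) (hθβ : applyDer θ β ∈ I) (i : Fin 3) :
    ((X : Fin 3 → MvPolynomial (Fin 3) F) ⨯₃ θ) i ∈ I := by
  obtain ⟨a, rfl⟩ := exists_eq_sum_C_mul_X hα
  obtain ⟨b, rfl⟩ := exists_eq_sum_C_mul_X hβ
  rw [applyDer_sum_C_mul_X] at hθα hθβ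
  have hab : a ⨯₃ b ≠ 0 := by
    refine crossProduct_ne_zero_iff_linearIndependent.2
      (LinearIndependent.of_comp (Fintype.linearCombination F
        (X : Fin 3 → MvPolynomial (Fin 3) F)) ?_)
    convert hαβ using 1
    ext1 i
    fin_cases i <;> simp [Fintype.linearCombination_apply, smul_eq_C_mul]
  obtain ⟨k, hk⟩ := Function.ne_iff.1 hab
  let φ := Ideal.Quotient.mk I
  have hdot (c : Fin 3 → F) {u : Fin 3 → MvPolynomial (Fin 3) F} (hu : ∑ j, C (c j) * u j ∈ I) :
      (φ.comp C ∘ c) ⬝ᵥ (φ ∘ u) = 0 := by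
    rw [← Ideal.Quotient.eq_zero_iff_mem] at hu
    simpa [φ, dotProduct] using hu
  have hunit : IsUnit (((φ.comp C ∘ a) ⨯₃ (φ.comp C ∘ b)) k) := by
    rw [← map_cross]
    exact (IsUnit.mk0 _ hk).map (φ.comp C)
  have hcross := cross_eq_zero_of_dotProduct_eq_zero hunit (hdot a hαI) (hdot b hβI)
    (hdot a hθα) (hdot b hθβ)
  rw [← map_cross] at hcross
  exact Ideal.Quotient.eq_zero_iff_mem.1 (congrFun hcross i)

theorem cross_cross_pderiv {f : MvPolynomial (Fin 3) F} {d : ℕ} (hf : f.IsHomogeneous d)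
    (θ : Fin 3 → MvPolynomial (Fin 3) F) :
    (X : Fin 3 → MvPolynomial (Fin 3) F) ⨯₃ θ ⨯₃ (fun j => pderiv j f) =
      (C (d : F) * f) • θ - applyDer θ f • X := by
  rw [cross_cross_eq_smul_sub_smul, ← X_applyDer hf]
  rfl

theorem dvd_of_dvd_cross {f p : MvPolynomial (Fin 3) F} {d : ℕ} (hf : f.IsHomogeneous d)
    (hd : (d : F) ≠ 0) (hp : Prime p) (hpf : ¬ p ∣ f) {θ : Fin 3 → MvPolynomial (Fin 3) F}
    (hθ : applyDer θ f = 0)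
    (hcross : ∀ i, p ∣ ((X : Fin 3 → MvPolynomial (Fin 3) F) ⨯₃ θ) i) (j : Fin 3) : p ∣ θ j := by
  have hvec (u v : Fin 3 → MvPolynomial (Fin 3) F) (hu : ∀ i, p ∣ u i) (i : Fin 3) :
      p ∣ (u ⨯₃ v) i := by
    fin_cases i <;>
      exact dvd_sub ((hu _).mul_right _) ((hu _).mul_right _)
  have hdf : p ∣ C (d : F) * f * θ j := by
    simpa [cross_cross_pderiv hf, hθ] using hvec _ (fun j => pderiv j f) hcross j
  have hunit : IsUnit (C (d : F) : MvPolynomial (Fin 3) F) := (IsUnit.mk0 _ hd).map C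
  rw [mul_assoc, hunit.dvd_mul_left] at hdf
  exact (hp.dvd_or_dvd hdf).resolve_left hpf

end Plane

section Arrangements

variable {F : Type*} [Field F] {A : Finset (MvPolynomial (Fin ℓ) F)}

theorem Qpoly_insert {L : MvPolynomial (Fin ℓ) F} (hL : L ∉ A) :
    Qpoly (insert L A) = L * Qpoly A :=
  Finset.prod_insert hL

namespace IsArrangement

theorem mono {B : Finset (MvPolynomial (Fin ℓ) F)} (hB : IsArrangement B) (hAB : A ⊆ B) :
    IsArrangement A :=
  ⟨fun α hα => hB.1 α (hAB hα), fun α hα β hβ => hB.2 α (hAB hα) β (hAB hβ)⟩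

theorem ne_zero (hA : IsArrangement A) {α : MvPolynomial (Fin ℓ) F} (hα : α ∈ A) : α ≠ 0 :=
  (hA.1 α hα).1

theorem isHomogeneous (hA : IsArrangement A) {α : MvPolynomial (Fin ℓ) F} (hα : α ∈ A) :
    α.IsHomogeneous 1 :=
  (hA.1 α hα).2

theorem prime (hA : IsArrangement A) {α : MvPolynomial (Fin ℓ) F} (hα : α ∈ A) : Prime α :=
  prime_of_isHomogeneous_one (hA.isHomogeneous hα) (hA.ne_zero hα)

theorem isHomogeneous_Qpoly (hA : IsArrangement A) : (Qpoly A).IsHomogeneous A.card := by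
  simpa [Qpoly] using IsHomogeneous.prod A id (fun _ => 1) fun α hα => hA.isHomogeneous hα

theorem Qpoly_ne_zero (hA : IsArrangement A) : Qpoly A ≠ 0 :=
  Finset.prod_ne_zero_iff.2 fun _ hα => hA.ne_zero hα

theorem not_dvd (hA : IsArrangement A) {α β : MvPolynomial (Fin ℓ) F} (hα : α ∈ A) (hβ : β ∈ A)
    (hαβ : α ≠ β) : ¬ α ∣ β := by
  intro hdvd
  obtain ⟨c, hc⟩ := exists_eq_smul_of_dvd (hA.isHomogeneous hα) (hA.ne_zero hα)
    (hA.isHomogeneous hβ) hdvd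
  exact hA.2 β hβ α hα hαβ.symm c hc

theorem linearIndependent_pair (hA : IsArrangement A) {α β : MvPolynomial (Fin ℓ) F}
    (hα : α ∈ A) (hβ : β ∈ A) (hαβ : α ≠ β) : LinearIndependent F ![α, β] :=
  (LinearIndependent.pair_iff' (hA.ne_zero hα)).2 fun c => (hA.2 β hβ α hα hαβ.symm c).symm

theorem not_dvd_Qpoly {L : MvPolynomial (Fin ℓ) F} (hA : IsArrangement (insert L A))
    (hL : L ∉ A) : ¬ L ∣ Qpoly A := by
  have hLmem := Finset.mem_insert_self L A
  rw [Qpoly, (hA.prime hLmem).dvd_finsetProd_iff]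
  rintro ⟨α, hα, hdvd⟩
  exact hA.not_dvd hLmem (Finset.mem_insert_of_mem hα) (ne_of_mem_of_not_mem hα hL).symm hdvd

theorem dvd_applyDer (hA : IsArrangement A) {θ : Fin ℓ → MvPolynomial (Fin ℓ) F}
    (hθ : applyDer θ (Qpoly A) = 0) {α : MvPolynomial (Fin ℓ) F} (hα : α ∈ A) :
    α ∣ applyDer θ α := by
  have hinsert : insert α (A.erase α) = A := Finset.insert_erase hα
  have hnot : α ∉ A.erase α := Finset.notMem_erase α A
  refine dvd_applyDer_of_dvd_applyDer_mul (hA.prime hα)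
    ((hinsert.symm ▸ hA).not_dvd_Qpoly hnot) (θ := θ) ?_
  rw [← Qpoly_insert hnot, hinsert, hθ]
  exact dvd_zero α

variable [CharZero F]

/-- Two members of `A` have a common zero `w ≠ 0`, so both are killed by the constant derivation
`∂_w`; multiplied by the product of the other members, `∂_w` is tangent to all of `A`. -/
theorem exists_isJacobianRelation (hA : IsArrangement A) (hℓ : 2 < ℓ) (hd : 2 ≤ A.card) :
    ∃ θ, θ ≠ 0 ∧ IsJacobianRelation (Qpoly A) (A.card - 2) θ := by
  obtain ⟨α, hα, β, hβ, hαβ⟩ := Finset.one_lt_card.1 hd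
  obtain ⟨w, hw₀, hwα, hwβ⟩ := exists_ne_zero_eval_eq_zero (by simpa using hℓ)
    (hA.isHomogeneous hα) (hA.isHomogeneous hβ)
  let B := (A.erase α).erase β
  have hβα : β ∈ A.erase α := Finset.mem_erase.2 ⟨hαβ.symm, hβ⟩
  have hB : IsArrangement B :=
    hA.mono ((Finset.erase_subset _ _).trans (Finset.erase_subset _ _))
  have hcard : B.card = A.card - 2 := by
    rw [Finset.card_erase_of_mem hβα, Finset.card_erase_of_mem hα, Nat.sub_sub]
  have hQ : Qpoly A = α * (β * Qpoly B) := by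
    rw [← Qpoly_insert (Finset.notMem_erase β _), Finset.insert_erase hβα,
      ← Qpoly_insert (Finset.notMem_erase α _), Finset.insert_erase hα]
  let δ : Fin ℓ → MvPolynomial (Fin ℓ) F := fun j => C (w j)
  have hδ₀ : δ ≠ 0 := by
    obtain ⟨k, hk⟩ := Function.ne_iff.1 hw₀
    exact Function.ne_iff.2 ⟨k, C_ne_zero.2 hk⟩
  have hδα : applyDer δ α = 0 := by rw [C_applyDer (hA.isHomogeneous hα), hwα, C_0]
  have hδβ : applyDer δ β = 0 := by rw [C_applyDer (hA.isHomogeneous hβ), hwβ, C_0]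
  refine ⟨subEuler A.card (applyDer δ (Qpoly B)) (Qpoly B • δ), ?_, ?_⟩
  · refine subEuler_ne_zero (smul_ne_zero hB.Qpoly_ne_zero hδ₀) (hA.isHomogeneous hα)
      (hA.ne_zero hα) (by simp) ?_ _ _
    rw [smul_applyDer, hδα, mul_zero]
  · refine isJacobianRelation_subEuler hA.isHomogeneous_Qpoly hA.Qpoly_ne_zero
      (Nat.cast_ne_zero.2 (by omega)) (fun j => ?_) ?_
    · simpa [δ, hcard] using hB.isHomogeneous_Qpoly.mul (isHomogeneous_C (Fin ℓ) (w j))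
    · rw [smul_applyDer, hQ, applyDer_mul, applyDer_mul, hδα, hδβ]
      ring

end IsArrangement

theorem mdr_le {r : ℕ} {θ : Fin ℓ → MvPolynomial (Fin ℓ) F} (hθ₀ : θ ≠ 0)
    (hθ : IsJacobianRelation (Qpoly A) r θ) : mdr A ≤ r :=
  Nat.sInf_le ⟨θ, hθ₀, hθ⟩

namespace IsArrangement

variable [CharZero F]

theorem mdr_le_card_sub_two (hA : IsArrangement A) (hℓ : 2 < ℓ) (hd : 2 ≤ A.card) :
    mdr A ≤ A.card - 2 :=
  let ⟨_, hθ₀, hθ⟩ := hA.exists_isJacobianRelation hℓ hd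
  mdr_le hθ₀ hθ

theorem exists_isJacobianRelation_mdr (hA : IsArrangement A) (hℓ : 2 < ℓ) (hd : 2 ≤ A.card) :
    ∃ θ, θ ≠ 0 ∧ IsJacobianRelation (Qpoly A) (mdr A) θ :=
  Nat.sInf_mem (s := {r | ∃ θ, θ ≠ 0 ∧ IsJacobianRelation (Qpoly A) r θ})
    ⟨_, hA.exists_isJacobianRelation hℓ hd⟩

theorem mdr_insert_le {L : MvPolynomial (Fin ℓ) F} (hA : IsArrangement (insert L A))
    (hL : L ∉ A) (hℓ : 2 < ℓ) (hd : 2 ≤ A.card) : mdr (insert L A) ≤ mdr A + 1 := by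
  have hLmem := Finset.mem_insert_self L A
  have hA' := hA.mono (Finset.subset_insert L A)
  obtain ⟨θ, hθ₀, hθ⟩ := hA'.exists_isJacobianRelation_mdr hℓ hd
  obtain ⟨η, hη₀, hη⟩ := exists_isJacobianRelation_mul hA'.isHomogeneous_Qpoly hA'.Qpoly_ne_zero
    (Nat.cast_ne_zero.2 (by omega)) (hA.isHomogeneous hLmem) (hA.ne_zero hLmem)
    (Nat.cast_ne_zero.2 (by omega)) hθ₀ hθ
  rw [← Qpoly_insert hL, add_comm] at hη
  exact mdr_le hη₀ hη

theorem exists_isJacobianRelation_dvd_applyDer {L : MvPolynomial (Fin ℓ) F}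
    (hA : IsArrangement (insert L A)) (hL : L ∉ A) (hd : A.card ≠ 0) {r : ℕ}
    {θ : Fin ℓ → MvPolynomial (Fin ℓ) F} (hθ₀ : θ ≠ 0)
    (hθ : IsJacobianRelation (Qpoly (insert L A)) r θ) :
    ∃ ψ, ψ ≠ 0 ∧ IsJacobianRelation (Qpoly A) r ψ ∧ L ∣ applyDer ψ L := by
  have hLmem := Finset.mem_insert_self L A
  have hA' := hA.mono (Finset.subset_insert L A)
  obtain ⟨q, hq⟩ := hA.dvd_applyDer hθ.2 hLmem
  have hθQ : applyDer θ (Qpoly A) = -q * Qpoly A := by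
    have hθL := hθ.2
    rw [Qpoly_insert hL, applyDer_mul, hq] at hθL
    exact mul_left_cancel₀ (hA.ne_zero hLmem) (by linear_combination hθL)
  refine ⟨subEuler A.card (-q) θ, ?_, ?_, ?_⟩
  · refine subEuler_ne_zero hθ₀ hA.isHomogeneous_Qpoly hA.Qpoly_ne_zero
      (Nat.cast_ne_zero.2 ?_) hθ.2 _ _
    exact Finset.card_ne_zero_of_mem hLmem
  · exact isJacobianRelation_subEuler hA'.isHomogeneous_Qpoly hA'.Qpoly_ne_zero
      (Nat.cast_ne_zero.2 hd) hθ.1 hθQ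
  · rw [subEuler, sub_applyDer, smul_applyDer, X_applyDer (hA.isHomogeneous hLmem), hq]
    exact dvd_sub (dvd_mul_right _ _) (dvd_mul_of_dvd_right (dvd_mul_left _ _) _)

end IsArrangement

end Arrangements

section GenericLine

open Matrix

variable {F : Type*} [Field F] {A : Finset (MvPolynomial (Fin 3) F)} {L : MvPolynomial (Fin 3) F}

/-- The line `L = 0` is generic with respect to `A`: it passes through no intersection point
of `A`, that is, at most one member of `A` vanishes at each of its points. -/
def IsGenericLine (A : Finset (MvPolynomial (Fin 3) F)) (L : MvPolynomial (Fin 3) F) : Prop :=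
  ∀ w : Fin 3 → F, w ≠ 0 → eval w L = 0 → (A.filter fun α => eval w α = 0).card ≤ 1

namespace IsGenericLine

theorem eq_of_eval_eq_zero (hgen : IsGenericLine A L) {w : Fin 3 → F} (hw₀ : w ≠ 0)
    (hwL : eval w L = 0) {α β : MvPolynomial (Fin 3) F} (hα : α ∈ A) (hwα : eval w α = 0)
    (hβ : β ∈ A) (hwβ : eval w β = 0) : α = β :=
  Finset.card_le_one.1 (hgen w hw₀ hwL) α (Finset.mem_filter.2 ⟨hα, hwα⟩) β
    (Finset.mem_filter.2 ⟨hβ, hwβ⟩)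

theorem pairwise_notMem_span_pair (hgen : IsGenericLine A L) (hA : IsArrangement (insert L A)) :
    (A : Set (MvPolynomial (Fin 3) F)).Pairwise fun α β => β ∉ Ideal.span {L, α} := by
  intro α hα β hβ hαβ hmem
  obtain ⟨w, hw₀, hwL, hwα⟩ := exists_ne_zero_eval_eq_zero (by simp)
    (hA.isHomogeneous (Finset.mem_insert_self L A))
    (hA.isHomogeneous (Finset.mem_insert_of_mem hα))
  obtain ⟨a, b, rfl⟩ := Ideal.mem_span_pair.1 hmem
  exact hαβ (hgen.eq_of_eval_eq_zero hw₀ hwL hα hwα hβ (by simp [hwL, hwα]))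

variable [CharZero F]

theorem dvd_of_isJacobianRelation (hgen : IsGenericLine A L) (hA : IsArrangement (insert L A))
    (hL : L ∉ A) {r : ℕ} (hr : r + 1 < A.card) {ψ : Fin 3 → MvPolynomial (Fin 3) F}
    (hψ : IsJacobianRelation (Qpoly A) r ψ) (hψL : L ∣ applyDer ψ L) (j : Fin 3) : L ∣ ψ j := by
  have hLmem := Finset.mem_insert_self L A
  have hA' := hA.mono (Finset.subset_insert L A)
  have hne : ∀ α ∈ A, L ≠ α := fun α hα => (ne_of_mem_of_not_mem hα hL).symm
  have hcross_hom (i : Fin 3) :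
      (((X : Fin 3 → MvPolynomial (Fin 3) F) ⨯₃ ψ) i).IsHomogeneous (r + 1) := by
    rw [add_comm]
    fin_cases i <;>
      exact ((isHomogeneous_X F _).mul (hψ.1 _)).sub ((isHomogeneous_X F _).mul (hψ.1 _))
  have hcross_mem (i : Fin 3) (α : MvPolynomial (Fin 3) F) (hα : α ∈ A) :
      ((X : Fin 3 → MvPolynomial (Fin 3) F) ⨯₃ ψ) i ∈ Ideal.span {L, α} := by
    have hLI : L ∈ Ideal.span {L, α} := Ideal.subset_span (by simp)
    have hαI : α ∈ Ideal.span {L, α} := Ideal.subset_span (by simp)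
    have hαmem := Finset.mem_insert_of_mem (b := L) hα
    exact cross_mem_of_applyDer_mem (hA.isHomogeneous hLmem) (hA'.isHomogeneous hα)
      (hA.linearIndependent_pair hLmem hαmem (hne α hα)) hLI hαI
      (Ideal.mem_of_dvd _ hψL hLI) (Ideal.mem_of_dvd _ (hA'.dvd_applyDer hψ.2 hα) hαI) i
  refine dvd_of_dvd_cross hA'.isHomogeneous_Qpoly (Nat.cast_ne_zero.2 (by omega))
    (hA.prime hLmem) (hA.not_dvd_Qpoly hL) hψ.2 (fun i => ?_) j
  exact dvd_of_forall_mem_span_pair (hA.isHomogeneous hLmem) (hA.ne_zero hLmem)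
    (fun α => hA'.isHomogeneous)
    (fun α hα => hA.not_dvd hLmem (Finset.mem_insert_of_mem hα) (hne α hα))
    (hgen.pairwise_notMem_span_pair hA) (hcross_hom i) hr (hcross_mem i)

theorem mdr_insert (hgen : IsGenericLine A L) (hA : IsArrangement (insert L A)) (hL : L ∉ A)
    (hd : 2 ≤ A.card) : mdr (insert L A) = mdr A + 1 := by
  have hLmem := Finset.mem_insert_self L A
  have hA' := hA.mono (Finset.subset_insert L A)
  refine (hA.mdr_insert_le hL (by simp) hd).antisymm ?_
  obtain ⟨θ, hθ₀, hθ⟩ := hA.exists_isJacobianRelation_mdr (by simp)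
    (hd.trans (Finset.card_le_card (Finset.subset_insert L A)))
  obtain ⟨ψ, hψ₀, hψ, hψL⟩ := hA.exists_isJacobianRelation_dvd_applyDer hL (by omega) hθ₀ hθ
  by_cases hr : mdr (insert L A) + 1 < A.card
  · obtain ⟨t, η, ht, hη₀, hη⟩ := exists_isJacobianRelation_of_dvd (hA.isHomogeneous hLmem)
      (hA.ne_zero hLmem) hψ₀ hψ (hgen.dvd_of_isJacobianRelation hA hL hr hψ hψL)
    have hle : mdr A ≤ t := mdr_le hη₀ hη
    omega
  · have hle : mdr A ≤ A.card - 2 := hA'.mdr_le_card_sub_two (by simp) hd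
    omega

end IsGenericLine

end GenericLine

section Tjurina

variable {F : Type*} [Field F]

/-- The intersection points of a line arrangement, each encoded by the set of lines through it. -/
noncomputable def intersectionPoints (A : Finset (MvPolynomial (Fin 3) F)) :
    Finset (Finset (MvPolynomial (Fin 3) F)) :=
  A.powerset.filter fun T =>
    ∃ v : Fin 3 → F, v ≠ 0 ∧ T = A.filter (fun α => eval v α = 0) ∧ 2 ≤ T.card

variable {A T : Finset (MvPolynomial (Fin 3) F)} {L : MvPolynomial (Fin 3) F}

theorem mem_intersectionPoints : T ∈ intersectionPoints A ↔
    ∃ v : Fin 3 → F, v ≠ 0 ∧ T = A.filter (fun α => eval v α = 0) ∧ 2 ≤ T.card := by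
  rw [intersectionPoints, Finset.mem_filter, Finset.mem_powerset, and_iff_right_iff_imp]
  rintro ⟨v, -, rfl, -⟩
  exact Finset.filter_subset _ _

theorem subset_of_mem_intersectionPoints (hT : T ∈ intersectionPoints A) : T ⊆ A :=
  Finset.mem_powerset.1 (Finset.mem_filter.1 hT).1

theorem nPoints_eq_card (A : Finset (MvPolynomial (Fin 3) F)) (j : ℕ) :
    nPoints A j = ((intersectionPoints A).filter fun T => T.card = j).card := by
  rw [nPoints, ← Set.ncard_coe_finset]
  congr 1
  ext T
  simp only [Set.mem_ofPred_eq, Finset.coe_filter, mem_intersectionPoints, ← exists_and_right,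
    and_assoc]

theorem tjurina_eq_sum (A : Finset (MvPolynomial (Fin 3) F)) :
    tjurina A = ∑ T ∈ intersectionPoints A, (T.card - 1) ^ 2 := by
  have hcard : ∀ T ∈ intersectionPoints A, T.card ∈ Finset.range (A.card + 1) := fun T hT =>
    Finset.mem_range_succ_iff.2 (Finset.card_le_card (subset_of_mem_intersectionPoints hT))
  rw [tjurina, ← Finset.sum_fiberwise_of_maps_to hcard]
  refine Finset.sum_congr rfl fun j _ => ?_
  rw [nPoints_eq_card, ← smul_eq_mul, ← Finset.sum_const]
  exact Finset.sum_congr rfl fun T hT => by rw [(Finset.mem_filter.1 hT).2]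

namespace IsGenericLine

theorem mem_intersectionPoints_iff_mem_insert (hgen : IsGenericLine A L) (hL : L ∉ A) :
    T ∈ intersectionPoints A ↔ T ∈ intersectionPoints (insert L A) ∧ L ∉ T := by
  simp only [mem_intersectionPoints]
  constructor
  · rintro ⟨v, hv₀, hT, hcard⟩
    have hvL : eval v L ≠ 0 := fun hvL => by
      have hle := hgen v hv₀ hvL
      rw [← hT] at hle
      omega
    refine ⟨⟨v, hv₀, by rw [Finset.filter_insert, if_neg hvL, hT], hcard⟩, fun hLT => ?_⟩
    exact hL (Finset.filter_subset _ _ (hT ▸ hLT))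
  · rintro ⟨⟨v, hv₀, hT, hcard⟩, hLT⟩
    have hvL : eval v L ≠ 0 := by simpa [hT] using hLT
    exact ⟨v, hv₀, by rw [hT, Finset.filter_insert, if_neg hvL], hcard⟩

theorem mem_image_pair_iff_mem_insert (hgen : IsGenericLine A L) (hA : IsArrangement (insert L A))
    (hL : L ∉ A) : T ∈ A.image (fun α => {L, α}) ↔
      T ∈ intersectionPoints (insert L A) ∧ L ∈ T := by
  rw [mem_intersectionPoints, Finset.mem_image]
  constructor
  · rintro ⟨α, hα, rfl⟩
    obtain ⟨w, hw₀, hwL, hwα⟩ := exists_ne_zero_eval_eq_zero (by simp)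
      (hA.isHomogeneous (Finset.mem_insert_self L A))
      (hA.isHomogeneous (Finset.mem_insert_of_mem hα))
    have hfilter : A.filter (fun β => eval w β = 0) = {α} :=
      Finset.eq_singleton_iff_unique_mem.2 ⟨Finset.mem_filter.2 ⟨hα, hwα⟩, fun β hβ =>
        hgen.eq_of_eval_eq_zero hw₀ hwL (Finset.mem_filter.1 hβ).1 (Finset.mem_filter.1 hβ).2
          hα hwα⟩
    refine ⟨⟨w, hw₀, ?_, ?_⟩, Finset.mem_insert_self _ _⟩
    · rw [Finset.filter_insert, if_pos hwL, hfilter]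
    · rw [Finset.card_pair (ne_of_mem_of_not_mem hα hL).symm]
  · rintro ⟨⟨v, hv₀, hT, hcard⟩, hLT⟩
    have hvL : eval v L = 0 := by
      rw [hT] at hLT
      exact (Finset.mem_filter.1 hLT).2
    have hLfilter : L ∉ A.filter fun α => eval v α = 0 := fun h => hL (Finset.mem_filter.1 h).1
    rw [Finset.filter_insert, if_pos hvL] at hT
    rw [hT, Finset.card_insert_of_notMem hLfilter] at hcard
    obtain ⟨α, hα⟩ := Finset.card_eq_one.1 ((hgen v hv₀ hvL).antisymm (by omega))
    have hαA : α ∈ A := Finset.filter_subset _ _ (hα ▸ Finset.mem_singleton_self α)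
    exact ⟨α, hαA, by rw [hT, hα]⟩

theorem intersectionPoints_insert (hgen : IsGenericLine A L) (hA : IsArrangement (insert L A))
    (hL : L ∉ A) : intersectionPoints (insert L A) =
      intersectionPoints A ∪ A.image fun α => {L, α} := by
  ext T
  rw [Finset.mem_union, hgen.mem_intersectionPoints_iff_mem_insert hL,
    hgen.mem_image_pair_iff_mem_insert hA hL]
  tauto

theorem tjurina_insert (hgen : IsGenericLine A L) (hA : IsArrangement (insert L A))
    (hL : L ∉ A) : tjurina (insert L A) = tjurina A + A.card := by
  have hdisjoint : Disjoint (intersectionPoints A) (A.image fun α => {L, α}) := by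
    refine Finset.disjoint_left.2 fun T hT hT' => ?_
    exact ((hgen.mem_intersectionPoints_iff_mem_insert hL).1 hT).2
      ((hgen.mem_image_pair_iff_mem_insert hA hL).1 hT').2
  have hinj : Set.InjOn (fun α => ({L, α} : Finset (MvPolynomial (Fin 3) F))) A := by
    intro α hα β _ hαβ
    have hmem : α ∈ ({L, β} : Finset (MvPolynomial (Fin 3) F)) := by simp [← hαβ]
    simpa [ne_of_mem_of_not_mem hα hL] using hmem
  have hdouble : ∑ α ∈ A, (({L, α} : Finset _).card - 1) ^ 2 = A.card := by
    rw [Finset.card_eq_sum_ones]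
    refine Finset.sum_congr rfl fun α hα => ?_
    rw [Finset.card_pair (ne_of_mem_of_not_mem hα hL).symm, Nat.add_one_sub_one, one_pow]
  rw [tjurina_eq_sum, tjurina_eq_sum, hgen.intersectionPoints_insert hA hL,
    Finset.sum_union hdisjoint, Finset.sum_image hinj, hdouble]

end IsGenericLine

end Tjurina

theorem generic_line_addition_general (A' : Finset (MvPolynomial (Fin 3) K)) (hd : 2 ≤ A'.card)
    (L : MvPolynomial (Fin 3) K) (hL : L ∉ A') (hA : IsArrangement (insert L A'))
    (hgen : IsGenericLine A' L) :
    tjurina (insert L A') = tjurina A' + A'.card ∧ mdr (insert L A') = mdr A' + 1 :=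
  ⟨hgen.tjurina_insert hA hL, hgen.mdr_insert hA hL hd⟩

/-- Let `A'` be an essential line arrangement of `d' ≥ 2` lines in `P^2`
and let `L` be a generic line, i.e. a line not in `A'` passing through no intersection
point of `A'` (so `L` meets the lines of `A'` in `d'` distinct points).
Set `A = A' ∪ {L}`. Then `τ(A) = τ(A') + d'` and `r(A) = r(A') + 1`. -/
theorem generic_line_addition (A' : Finset (MvPolynomial (Fin 3) K))
    (hA' : IsArrangement A') (hA'ess : IsEssential A') (hd : 2 ≤ A'.card)
    (L : MvPolynomial (Fin 3) K) (hL : L ∉ A')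
    (hA : IsArrangement (insert L A'))
    (hgen : ∀ w : Fin 3 → K, w ≠ 0 → eval w L = 0 →
      (A'.filter fun α => eval w α = 0).card ≤ 1) :
    tjurina (insert L A') = tjurina A' + A'.card ∧
    mdr (insert L A') = mdr A' + 1 :=
  generic_line_addition_general A' hd L hL hA hgen
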